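/- Let S be a nonnegative random variable with 0 < E[S] < ∞ and E[S²] < ∞, and fix a job size x > 0. If the coefficient of variation of S exceeds 1, i.e. E[S²] > 2·E[S]² (equivalently Var(S) > E[S]²), then there exists a resetting rate r > 0 for which the mean service time under Poissonian resetting is strictly smaller than without resetting: (1 − S̃(r·x)) / ( r·S̃(r·x) ) < x·E[S]. -/

import Mathlib

open MeasureTheory ProbabilityTheory Real

/-!
With `u = r * x`, resetting at rate `r` helps if and only if `S̃(u) * (1 + u * E[S]) > 1`. The
expansion `S̃(u) = 1 - u * E[S] + u² * E[S²] / 2 + o(u²)` turns the left-hand side into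
`1 + u² * (E[S²] / 2 - E[S]²) + o(u²)`, so every small enough rate helps when `E[S²] > 2 * E[S]²`.
Since `S̃(u) = mgf S P (-u)` and `0` may lie on the boundary of the domain of the moment
generating function, the expansion is one-sided; it comes from dominated convergence, with
dominating function `S² / 2`.
-/

open Filter Topology Asymptotics

lemma exp_le_quadratic_of_nonpos {x : ℝ} (hx : x ≤ 0) : exp x ≤ 1 + x + x ^ 2 / 2 := by
  have h_quad : 1 - x + x ^ 2 / 2 ≤ exp (-x) := by
    simpa [← sub_eq_add_neg] using quadratic_le_exp_of_nonneg (neg_nonneg.2 hx)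
  have h_quad_pos : 0 < 1 - x + x ^ 2 / 2 := by linarith [sq_nonneg x]
  have h_prod : (1 + x + x ^ 2 / 2) * (1 - x + x ^ 2 / 2) = 1 + (x ^ 2) ^ 2 / 4 := by ring
  calc exp x = (exp (-x))⁻¹ := by rw [exp_neg, inv_inv]
    _ ≤ (1 - x + x ^ 2 / 2)⁻¹ := inv_anti₀ h_quad_pos h_quad
    _ ≤ 1 + x + x ^ 2 / 2 := by
      rw [inv_le_iff_one_le_mul₀ h_quad_pos, h_prod]
      exact le_add_of_nonneg_right (by positivity)

lemma abs_exp_sub_one_sub_self_le_of_nonpos {x : ℝ} (hx : x ≤ 0) :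
    |exp x - 1 - x| ≤ x ^ 2 / 2 := by
  rw [abs_of_nonneg (by linarith [add_one_le_exp x])]
  linarith [exp_le_quadratic_of_nonpos hx]

lemma tendsto_exp_mul_sub_one_sub_div_sq (a : ℝ) :
    Tendsto (fun t ↦ (exp (t * a) - 1 - t * a) / t ^ 2) (𝓝[≠] 0) (𝓝 (a ^ 2 / 2)) := by
  have h_lim : Tendsto (fun t : ℝ ↦ t * a) (𝓝 0) (𝓝 0) := by
    simpa using (continuous_mul_const a).tendsto 0
  have h_bigO : (fun t : ℝ ↦ (t * a) ^ 2) =O[𝓝 0] fun t ↦ t ^ 2 := by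
    simpa only [mul_pow, mul_comm] using isBigO_const_mul_self (a ^ 2) (fun t : ℝ ↦ t ^ 2) (𝓝 0)
  have h_littleO :
      (fun t ↦ exp (t * a) - 1 - t * a - (t * a) ^ 2 / 2) =o[𝓝 0] fun t ↦ t ^ 2 := by
    refine (((exp_sub_sum_range_succ_isLittleO_pow 2).comp_tendsto h_lim).trans_isBigO
      h_bigO).congr_left fun t ↦ ?_
    norm_num [Finset.sum_range_succ, sub_sub, add_assoc]
  have h_div : Tendsto (fun t ↦ (exp (t * a) - 1 - t * a - (t * a) ^ 2 / 2) / t ^ 2 + a ^ 2 / 2)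
      (𝓝[≠] 0) (𝓝 (a ^ 2 / 2)) := by
    simpa only [zero_add] using
      (h_littleO.tendsto_div_nhds_zero.mono_left nhdsWithin_le_nhds).add_const (a ^ 2 / 2)
  refine h_div.congr' ?_
  filter_upwards [self_mem_nhdsWithin] with t (ht : t ≠ 0)
  field_simp
  ring

section MomentGeneratingFunction

variable {Ω : Type*} [MeasurableSpace Ω] {μ : Measure Ω} {X : Ω → ℝ}

lemma tendsto_integral_exp_mul_sub_one_sub_div_sq (hX : MemLp X 2 μ) (hX0 : 0 ≤ᵐ[μ] X) :
    Tendsto (fun t ↦ ∫ ω, (exp (t * X ω) - 1 - t * X ω) / t ^ 2 ∂μ) (𝓝[<] 0)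
      (𝓝 (∫ ω, X ω ^ 2 / 2 ∂μ)) := by
  have hXm : AEMeasurable X μ := hX.aestronglyMeasurable.aemeasurable
  refine tendsto_integral_filter_of_dominated_convergence (fun ω ↦ X ω ^ 2 / 2)
    (.of_forall fun t ↦ (by fun_prop : AEMeasurable _ μ).aestronglyMeasurable) ?_
    (hX.integrable_sq.div_const 2) (.of_forall fun ω ↦ ?_)
  · filter_upwards [self_mem_nhdsWithin] with t (ht : t < 0)
    filter_upwards [hX0] with ω (hω : 0 ≤ X ω)
    rw [norm_div, norm_of_nonneg (sq_nonneg t), div_le_iff₀ (sq_pos_of_neg ht)]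
    calc |exp (t * X ω) - 1 - t * X ω|
      _ ≤ (t * X ω) ^ 2 / 2 :=
        abs_exp_sub_one_sub_self_le_of_nonpos (mul_nonpos_of_nonpos_of_nonneg ht.le hω)
      _ = X ω ^ 2 / 2 * t ^ 2 := by ring
  · exact (tendsto_exp_mul_sub_one_sub_div_sq (X ω)).mono_left
      (nhdsWithin_mono 0 fun _ ht ↦ ne_of_lt ht)

lemma integrable_exp_mul_of_nonpos_of_nonneg [IsFiniteMeasure μ] (hX : AEMeasurable X μ)
    (hX0 : 0 ≤ᵐ[μ] X) {t : ℝ} (ht : t ≤ 0) : Integrable (fun ω ↦ exp (t * X ω)) μ := by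
  simpa using integrable_exp_mul_of_le (X := -X) (-t) 0 (neg_nonneg.2 ht) hX.neg
    (hX0.mono fun ω hω ↦ neg_nonpos.2 hω)

variable [IsProbabilityMeasure μ]

lemma tendsto_mgf_sub_one_sub_div_sq (hX : MemLp X 2 μ) (hX0 : 0 ≤ᵐ[μ] X) :
    Tendsto (fun t ↦ (mgf X μ t - 1 - t * μ[X]) / t ^ 2) (𝓝[<] 0) (𝓝 (μ[X ^ 2] / 2)) := by
  have h_lim := tendsto_integral_exp_mul_sub_one_sub_div_sq hX hX0
  rw [integral_div] at h_lim
  refine h_lim.congr' ?_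
  filter_upwards [self_mem_nhdsWithin] with t (ht : t < 0)
  have h_exp : Integrable (fun ω ↦ exp (t * X ω)) μ :=
    integrable_exp_mul_of_nonpos_of_nonneg hX.aestronglyMeasurable.aemeasurable hX0 ht.le
  have h_linear : Integrable (fun ω ↦ t * X ω) μ := (hX.integrable one_le_two).const_mul t
  have h_exp_sub : Integrable (fun ω ↦ exp (t * X ω) - 1) μ := h_exp.sub (integrable_const 1)
  rw [integral_div, integral_sub h_exp_sub h_linear,
    integral_sub h_exp (integrable_const 1), integral_const_mul, integral_const, probReal_univ,
    one_smul, mgf]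

lemma eventually_one_lt_mgf_mul_one_sub (hX : MemLp X 2 μ) (hX0 : 0 ≤ᵐ[μ] X)
    (hcv : 2 * μ[X] ^ 2 < μ[X ^ 2]) :
    ∀ᶠ t in 𝓝[<] 0, 1 < mgf X μ t * (1 - t * μ[X]) := by
  set m := μ[X]
  set g : ℝ → ℝ := fun t ↦ (mgf X μ t - 1 - t * m) / t ^ 2 with hg
  have h_factor : Tendsto (fun t : ℝ ↦ 1 - t * m) (𝓝[<] 0) (𝓝 1) := by
    have h_cont : Continuous fun t : ℝ ↦ 1 - t * m := by fun_prop
    simpa using (h_cont.tendsto 0).mono_left nhdsWithin_le_nhds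
  have h_lim : Tendsto (fun t ↦ g t * (1 - t * m) - m ^ 2) (𝓝[<] 0)
      (𝓝 (μ[X ^ 2] / 2 * 1 - m ^ 2)) :=
    ((tendsto_mgf_sub_one_sub_div_sq hX hX0).mul h_factor).sub_const (m ^ 2)
  have h_lim_pos : 0 < μ[X ^ 2] / 2 * 1 - m ^ 2 := by linarith
  filter_upwards [h_lim.eventually_const_lt h_lim_pos, self_mem_nhdsWithin]
    with t h_pos (ht : t < 0)
  have h_expand : mgf X μ t * (1 - t * m) = 1 + t ^ 2 * (g t * (1 - t * m) - m ^ 2) := by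
    rw [hg]
    field_simp [ht.ne]
    ring
  rw [h_expand]
  exact lt_add_of_pos_right 1 (mul_pos (sq_pos_of_neg ht) h_pos)

end MomentGeneratingFunction

lemma one_sub_div_mul_lt_iff {L r c : ℝ} (hr : 0 < r) (hL : 0 < L) :
    (1 - L) / (r * L) < c ↔ 1 < L * (1 + r * c) := by
  rw [div_lt_iff₀ (mul_pos hr hL), sub_lt_iff_lt_add,
    show c * (r * L) + L = L * (1 + r * c) by ring]

/-- **Multiplicative model: `CV_S > 1` makes resetting beneficial.**
If `E[S²] > 2·E[S]²` (i.e. the coefficient of variation of `S` exceeds 1),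
then there exists a resetting rate `r > 0` with
`(1 − S̃(rx))/(r·S̃(rx)) < x·E[S]`, where `S̃(u) = E[e^{-uS}]`. -/
theorem multiplicative_cv_condition_beneficial
    {Ω : Type*} [MeasurableSpace Ω] {P : Measure Ω} [IsProbabilityMeasure P]
    (S : Ω → ℝ) (hSmeas : Measurable S) (hSnn : ∀ ω, 0 ≤ S ω)
    (hS1 : Integrable S P) (hS2 : Integrable (fun ω => S ω ^ 2) P)
    (hSpos : 0 < ∫ ω, S ω ∂P)
    (hCV : ∫ ω, S ω ^ 2 ∂P > 2 * (∫ ω, S ω ∂P) ^ 2)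
    (x : ℝ) (hx : 0 < x)
    (Stilde : ℝ → ℝ)
    (hSt : ∀ u : ℝ, Stilde u = ∫ ω, Real.exp (-(u * S ω)) ∂P) :
    ∃ r : ℝ, 0 < r ∧
      (1 - Stilde (r * x)) / (r * Stilde (r * x)) < x * ∫ ω, S ω ∂P := by
  have h_nonneg : 0 ≤ᵐ[P] S := .of_forall hSnn
  have h_memLp : MemLp S 2 P := (memLp_two_iff_integrable_sq hSmeas.aestronglyMeasurable).2 hS2
  obtain ⟨t, h_one_lt, ht : t < 0⟩ :=
    ((eventually_one_lt_mgf_mul_one_sub h_memLp h_nonneg hCV).and self_mem_nhdsWithin).exists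
  have h_rate : 0 < -t / x := div_pos (neg_pos.2 ht) hx
  have h_mgf : Stilde (-t / x * x) = mgf S P t := by
    rw [hSt, div_mul_cancel₀ _ hx.ne']
    simp only [neg_mul, neg_neg, mgf]
  have h_mgf_pos : 0 < mgf S P t :=
    mgf_pos (integrable_exp_mul_of_nonpos_of_nonneg hSmeas.aemeasurable h_nonneg ht.le)
  refine ⟨-t / x, h_rate, ?_⟩
  rwa [h_mgf, one_sub_div_mul_lt_iff h_rate h_mgf_pos, ← mul_assoc, div_mul_cancel₀ _ hx.ne',
    neg_mul, ← sub_eq_add_neg]
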